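/- Let r ≥ 2 and k_1,…,k_r ≥ 1 be integers, set k := max{k_1,…,k_r}, let 0 ≤ δ ≤ 1/(2(r+1)) be a real number, and let n be a positive integer such that (1 − (r+1)δ)·n ≥ Σ_{i=1}^{r}(k_i − 1) + k + 1 and k ≥ (1/(r+1) − δ)·n − 1. Then for all integers u_1,…,u_r with 0 ≤ u_i ≤ k_i − 1 for each i ∈ {1,…,r}, one has Σ_{i=1}^{r} C(2(k_i − 1) − 2u_i + 1, 2) − C(n − u_1 − ⋯ − u_r, 2) < −δ·C(n,2). -/

import Mathlib

/-- The binomial coefficient `C(m,2)` viewed as the quadratic polynomial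
`m(m−1)/2` (evaluated at a real number `m`). -/
noncomputable def choose2 (m : ℝ) : ℝ := m * (m - 1) / 2

theorem aux_zero (s δ n A c : ℝ) (hs : 3 ≤ s) (hδ0 : 0 ≤ δ) (hn : 1 ≤ n)
    (hA : 0 ≤ A) (hc : A + 2 + s * δ * n ≤ c) (hA2 : (1 / s - δ) * n ≤ A + 2) :
    δ * (n * (n - 1)) < c * (c - 1) := by
  have hs0 : 0 < s := by linarith
  have h1 : (1 / s + (s - 1) * δ) * n ≤ c := by nlinarith
  have hsd : 0 ≤ s * δ * n := by positivity
  have hc2 : 2 ≤ c := by linarith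
  have hθ : 8 / 3 * δ ≤ (1 / s + (s - 1) * δ) ^ 2 := by
    have e : (1 / s + (s - 1) * δ) ^ 2
        = (1 / s - (s - 1) * δ) ^ 2 + 4 * δ - 4 * δ * (1 / s) := by
      field_simp
      ring
    have h3 : 1 / s ≤ 1 / 3 := one_div_le_one_div_of_le (by norm_num) hs
    nlinarith [sq_nonneg (1 / s - (s - 1) * δ), mul_le_mul_of_nonneg_left h3 hδ0]
  have hp : 0 ≤ (1 / s + (s - 1) * δ) * n := by
    have : 0 ≤ (s - 1) * δ := mul_nonneg (by linarith) hδ0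
    positivity
  have h4 : ((1 / s + (s - 1) * δ) * n) ^ 2 ≤ c ^ 2 := pow_le_pow_left₀ hp h1 2
  have h5 : 8 / 3 * δ * n ^ 2 ≤ c ^ 2 := by
    calc _ ≤ (1 / s + (s - 1) * δ) ^ 2 * n ^ 2 := by gcongr
      _ ≤ _ := by rw [← mul_pow]; exact h4
  have h6 : 0 ≤ δ * n := by positivity
  nlinarith

theorem aux_top (s δ n A c : ℝ) (hs : 3 ≤ s) (hδ0 : 0 ≤ δ) (hn : 1 ≤ n)
    (hA : 0 ≤ A) (hc : A + 2 + s * δ * n ≤ c) (hA2 : (1 / s - δ) * n ≤ A + 2) :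
    2 * A * (2 * A + 1) + δ * (n * (n - 1)) < (c + A) * (c + A - 1) := by
  have hs0 : 0 < s := by linarith
  have hsd : 0 ≤ s * δ * n := by positivity
  have hdn : 0 ≤ δ * n := by positivity
  have e : (c + A) * (c + A - 1) - 2 * A * (2 * A + 1) = (c - A - 1) * (4 * A + (c - A)) := by ring
  have h1 : (1 + s * δ * n) * (A + 2 + s * δ * n) ≤ (c - A - 1) * (4 * A + (c - A)) := by
    apply mul_le_mul <;> nlinarith
  have h2 : s * δ * n * ((1 / s - δ) * n + s * δ * n) ≤ s * δ * n * (A + 2 + s * δ * n) :=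
    mul_le_mul_of_nonneg_left (by linarith) hsd
  have h3 : s * δ * n * ((1 / s - δ) * n + s * δ * n)
      = δ * n * n + (δ * n) ^ 2 * (s * (s - 1)) := by
    field_simp
    ring
  have h4 : 0 ≤ (δ * n) ^ 2 * (s * (s - 1)) := by
    have : 0 ≤ s - 1 := by linarith
    positivity
  nlinarith

/-- **Claim (optimization step in the proof of the matching theorem).**
Under the hypotheses of the Cockayne–Lorimer-type theorem, together with
`k ≥ (1/(r+1) − δ)·n − 1` where `k = max kᵢ`, for all integers `0 ≤ uᵢ ≤ kᵢ − 1`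
one has `Σᵢ C(2(kᵢ−1) − 2uᵢ + 1, 2) − C(n − Σᵢ uᵢ, 2) < −δ·C(n,2)`. -/
theorem optimization_claim
    (r : ℕ) (hr : 2 ≤ r) (k : Fin r → ℕ) (hk : ∀ i, 1 ≤ k i)
    (δ : ℝ) (hδ0 : 0 ≤ δ) (hδ1 : δ ≤ 1 / (2 * (r + 1)))
    (n : ℕ) (hn : 1 ≤ n)
    (hcond : (∑ i, ((k i : ℝ) - 1)) + ((Finset.univ.sup k : ℕ) : ℝ) + 1
      ≤ (1 - (r + 1) * δ) * n)
    (hkmax : (1 / (r + 1 : ℝ) - δ) * n - 1 ≤ ((Finset.univ.sup k : ℕ) : ℝ))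
    (u : Fin r → ℕ) (hu : ∀ i, u i ≤ k i - 1) :
    (∑ i, choose2 (2 * ((k i : ℝ) - 1) - 2 * (u i : ℝ) + 1))
        - choose2 ((n : ℝ) - ∑ i, (u i : ℝ))
      < -δ * choose2 (n : ℝ) := by
  set K := Finset.univ.sup k with hK
  have hkK : ∀ i, k i ≤ K := fun i => Finset.le_sup (f := k) (Finset.mem_univ i)
  have hKR : ∀ i, (k i : ℝ) ≤ K := fun i => by exact_mod_cast hkK i
  have hr3 : (3 : ℝ) ≤ (r : ℝ) + 1 := by
    have : (2 : ℝ) ≤ r := by exact_mod_cast hr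
    linarith
  have hnR : (1 : ℝ) ≤ n := by exact_mod_cast hn
  let x : Fin r → ℝ := fun i => (k i : ℝ) - 1 - u i
  have hx0 : ∀ i, 0 ≤ x i := fun i => by
    have h1 := hu i
    have h2 := hk i
    have h3 : u i + 1 ≤ k i := by omega
    have h4 : (u i : ℝ) + 1 ≤ k i := by exact_mod_cast h3
    simp only [x]; linarith
  have hxA : ∀ i, x i ≤ (K : ℝ) - 1 := fun i => by
    have h1 := hKR i
    have h2 : (0 : ℝ) ≤ u i := Nat.cast_nonneg _
    simp only [x]; linarith
  obtain ⟨j, -, hj⟩ := Finset.exists_max_image Finset.univ x ⟨⟨0, by omega⟩, Finset.mem_univ _⟩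
  have hX : x j ≤ ∑ i, x i :=
    Finset.single_le_sum (fun i _ => hx0 i) (Finset.mem_univ j)
  have hsum : ∑ i, choose2 (2 * ((k i : ℝ) - 1) - 2 * (u i : ℝ) + 1)
      ≤ (2 * x j + 1) * ∑ i, x i := by
    rw [Finset.mul_sum]
    apply Finset.sum_le_sum
    intro i _
    have h1 := hj i (Finset.mem_univ i)
    have h2 := hx0 i
    have e : choose2 (2 * ((k i : ℝ) - 1) - 2 * (u i : ℝ) + 1) = (2 * x i + 1) * x i := by
      simp only [choose2, x]; ring
    rw [e]
    apply mul_le_mul_of_nonneg_right _ h2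
    linarith
  have hXe : ∑ i, x i = (∑ i, ((k i : ℝ) - 1)) - ∑ i, (u i : ℝ) := by
    simp only [x]; rw [Finset.sum_sub_distrib]
  obtain ⟨S, hS⟩ : ∃ S, S = ∑ i, ((k i : ℝ) - 1) := ⟨_, rfl⟩
  obtain ⟨U, hU⟩ : ∃ U, U = ∑ i, (u i : ℝ) := ⟨_, rfl⟩
  obtain ⟨X, hXX⟩ : ∃ X, X = ∑ i, x i := ⟨_, rfl⟩
  obtain ⟨M, hM⟩ : ∃ M, M = x j := ⟨_, rfl⟩
  obtain ⟨A, hA⟩ : ∃ A, A = (K : ℝ) - 1 := ⟨_, rfl⟩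
  obtain ⟨c, hc⟩ : ∃ c, c = (n : ℝ) - S := ⟨_, rfl⟩
  have hM0 := hx0 j
  have hMA := hxA j
  rw [← hM] at hM0 hMA hX hsum
  rw [← hXX] at hX hsum hXe
  rw [← hS, ← hU] at hXe
  rw [← hS] at hcond
  rw [← hU]
  rw [← hA] at hMA
  have hA0 : 0 ≤ A := le_trans hM0 hMA
  have hc1 : A + 2 + ((r : ℝ) + 1) * δ * n ≤ c := by nlinarith
  have hA2 : (1 / ((r : ℝ) + 1) - δ) * n ≤ A + 2 := by linarith
  have hz := aux_zero _ δ n A c hr3 hδ0 hnR hA0 hc1 hA2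
  have ht := aux_top _ δ n A c hr3 hδ0 hnR hA0 hc1 hA2
  have hsd : 0 ≤ ((r : ℝ) + 1) * δ * n := by positivity
  have hnU : (n : ℝ) - U = c + X := by linarith
  rw [hnU]
  have hmono : (2 * M + 1) * X - (c + X) * (c + X - 1) / 2
      ≤ (2 * M + 1) * M - (c + M) * (c + M - 1) / 2 := by
    have : 0 ≤ (X - M) * ((2 * c + X + M - 1) / 2 - (2 * M + 1)) :=
      mul_nonneg (by linarith) (by linarith)
    nlinarith
  have hconv : (2 * M + 1) * M - (c + M) * (c + M - 1) / 2 < - (δ * (n * (n - 1))) / 2 := by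
    rcases le_total (3 / 2 * M + 3 / 2 - c) 0 with h | h
    · have := mul_nonneg hM0 (neg_nonneg.2 h)
      nlinarith
    · have : 0 ≤ (A - M) * (3 / 2 * (A + M) + 3 / 2 - c) :=
        mul_nonneg (by linarith) (by linarith)
      nlinarith
  simp only [choose2] at hsum ⊢
  linarith
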